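/- Let (X_n, p_{n+1}) be a tower of fibrations of pointed spaces with a chosen basepoint of lim_n X_n, let k ≥ 0, and let α : I^k → lim_n X_n be a map sending ∂I^k to the basepoint whose class in π_k(lim_n X_n) lies in the kernel of P : π_k(lim_n X_n) → lim_n π_k X_n. Set α_n = P_n ∘ α. For any two choices (β_n)_{n≥0} and (β̄_n)_{n≥0} of nullhomotopies of the α_n, the families ([β_n * (p_{n+1}∘β_{n+1}^{-1})])_{n≥0} and ([β̄_n * (p_{n+1}∘β̄_{n+1}^{-1})])_{n≥0} of elements of π_{k+1}X_n lie in the same orbit of the lim¹ action, i.e., they represent the same element φ(α) of lim¹_n π_{k+1}X_n. -/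

import Mathlib

open scoped unitInterval Topology Topology.Homotopy

noncomputable section

/-- A map is a *Serre fibration* if it has the homotopy lifting property
with respect to all cubes `I^k`. -/
def IsSerreFibration {E B : Type} [TopologicalSpace E] [TopologicalSpace B]
    (p : C(E, B)) : Prop :=
  ∀ (k : ℕ) (f : C((Fin k → I), E)) (H : C(I × (Fin k → I), B)),
    (∀ q, H (0, q) = p (f q)) →
      ∃ G : C(I × (Fin k → I), E),
        (∀ q, G (0, q) = f q) ∧ ∀ z, p (G z) = H z

/-- The inverse limit of a tower of spaces. -/
def TowerLim (X : ℕ → Type) [∀ n, TopologicalSpace (X n)]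
    (p : ∀ n, C(X (n + 1), X n)) : Type :=
  { z : ∀ n, X n // ∀ n, p n (z (n + 1)) = z n }

instance {X : ℕ → Type} [∀ n, TopologicalSpace (X n)] (p : ∀ n, C(X (n + 1), X n)) :
    TopologicalSpace (TowerLim X p) :=
  instTopologicalSpaceSubtype

/-- The projection from the inverse limit of a tower to the `n`th space. -/
def TowerLim.proj {X : ℕ → Type} [∀ n, TopologicalSpace (X n)]
    {p : ∀ n, C(X (n + 1), X n)} (n : ℕ) : C(TowerLim X p, X n) :=
  ⟨fun z => z.1 n, (continuous_apply n).comp continuous_subtype_val⟩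

/-- The map induced on homotopy groups (in particular on `π_k` for `N = Fin k`)
by a continuous map `f` with `f x = y`. -/
def piMap {X Y : Type} [TopologicalSpace X] [TopologicalSpace Y] (N : Type)
    (f : C(X, Y)) {x : X} {y : Y} (hf : f x = y) :
    HomotopyGroup N X x → HomotopyGroup N Y y :=
  Quotient.map
    (fun g => (⟨f.comp g.1, fun q hq => by
        rw [ContinuousMap.comp_apply, g.2 q hq, hf]⟩ : GenLoop N Y y))
    (fun g h H => H.map fun F => F.compContinuousMap f)


/-- The map `π_k (lim_n X_n) → π_k (X n)` induced by the projection `TowerLim.proj n`,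
for the basepoint `⟨x, hx⟩` of the inverse limit. -/
def piProjMap {X : ℕ → Type} [∀ n, TopologicalSpace (X n)] {p : ∀ n, C(X (n + 1), X n)}
    (k : ℕ) {x : ∀ n, X n} (hx : ∀ n, p n (x (n + 1)) = x n) (n : ℕ) :
    HomotopyGroup (Fin k) (TowerLim X p) (⟨x, hx⟩ : TowerLim X p) →
      HomotopyGroup (Fin k) (X n) (x n) :=
  piMap (Fin k) (TowerLim.proj n) rfl

/-- The map `π_k (X (n+1)) → π_k (X n)` induced by the map `p n` of the tower. -/
def piTowerMap {X : ℕ → Type} [∀ n, TopologicalSpace (X n)] {p : ∀ n, C(X (n + 1), X n)}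
    (k : ℕ) {x : ∀ n, X n} (hx : ∀ n, p n (x (n + 1)) = x n) (n : ℕ) :
    HomotopyGroup (Fin k) (X (n + 1)) (x (n + 1)) → HomotopyGroup (Fin k) (X n) (x n) :=
  piMap (Fin k) (p n) (hx n)

/-- The distinguished basepoint of `HomotopyGroup N X x`: the class of the constant map. -/
def piConst {X : Type} [TopologicalSpace X] (N : Type) (x : X) : HomotopyGroup N X x :=
  ⟦GenLoop.const⟧

/-- The class in `HomotopyGroup N X x` of a generalized loop. -/
def piCls {N X : Type} [TopologicalSpace X] {x : X} (g : GenLoop N X x) :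
    HomotopyGroup N X x :=
  ⟦g⟧

/-- The generalized loop obtained by composing a generalized loop with a continuous map
`f` satisfying `f x = y`. -/
def genLoopMap {X Y : Type} [TopologicalSpace X] [TopologicalSpace Y] (N : Type)
    (f : C(X, Y)) {x : X} {y : Y} (hf : f x = y) (g : GenLoop N X x) : GenLoop N Y y :=
  ⟨f.comp g.1, fun q hq => by rw [ContinuousMap.comp_apply, g.2 q hq, hf]⟩

/-- `β : I^{k+1} → X` is a *nullhomotopy* of the generalized loop `α : I^k → X`
(writing points of `I^{k+1}` as `(p, t)` with `t` the last coordinate):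
`β (p, 0) = x` for all `p`, `β (p, 1) = α p` for all `p`, and `β (p, t) = x`
for all `p ∈ ∂I^k`. -/
def IsNullhomotopy {k : ℕ} {X : Type} [TopologicalSpace X] {x : X}
    (α : GenLoop (Fin k) X x) (β : C((Fin (k + 1) → I), X)) : Prop :=
  (∀ q : Fin (k + 1) → I, q (Fin.last k) = 0 → β q = x) ∧
  (∀ q : Fin (k + 1) → I, q (Fin.last k) = 1 → β q = α fun i => q i.castSucc) ∧
  (∀ q : Fin (k + 1) → I, (∃ i : Fin k, q i.castSucc = 0 ∨ q i.castSucc = 1) → β q = x)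

/-- `c = β * (f ∘ β'⁻¹)` : the concatenation, in the last coordinate of the cube `I^{k+1}`,
of `β` with the reverse (in the last coordinate) of `f ∘ β'`. -/
def IsGluedWithReverse {k : ℕ} {X Y : Type} [TopologicalSpace X] [TopologicalSpace Y]
    (β : C((Fin (k + 1) → I), X)) (f : C(Y, X)) (β' : C((Fin (k + 1) → I), Y))
    (c : (Fin (k + 1) → I) → X) : Prop :=
  ∀ q : Fin (k + 1) → I, c q =
    if (q (Fin.last k) : ℝ) ≤ 1 / 2 then
      β (Function.update q (Fin.last k)
        (Set.projIcc 0 1 zero_le_one (2 * (q (Fin.last k) : ℝ))))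
    else
      f (β' (Function.update q (Fin.last k)
        (Set.projIcc 0 1 zero_le_one (2 - 2 * (q (Fin.last k) : ℝ)))))

/-- Reindexing of a generalized loop along `Fin k ≃ {j : Fin (k+1) // j ≠ last}`. -/
def reLoop {k : ℕ} {X : Type} [TopologicalSpace X] {x : X} (α : GenLoop (Fin k) X x) :
    GenLoop {j : Fin (k + 1) // j ≠ Fin.last k} X x :=
  ⟨α.1.comp ⟨fun q i => q ⟨i.castSucc, (Fin.castSucc_lt_last i).ne⟩, by fun_prop⟩, by
    rintro y ⟨⟨j, hj⟩, h⟩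
    refine α.2 _ ⟨j.castPred hj, ?_⟩
    simpa using h⟩

/-- A nullhomotopy viewed as a path in the space of generalized loops. -/
def nullPath {k : ℕ} {X : Type} [TopologicalSpace X] {x : X} {α : GenLoop (Fin k) X x}
    {β : C((Fin (k + 1) → I), X)} (h : IsNullhomotopy α β) :
    Path (GenLoop.const : GenLoop {j : Fin (k + 1) // j ≠ Fin.last k} X x) (reLoop α) where
  toFun t := ⟨(β.comp (Cube.insertAt (Fin.last k))).curry t, by
    rintro y ⟨⟨j, hj⟩, hy⟩
    refine h.2.2 _ ⟨j.castPred hj, ?_⟩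
    simpa [hj] using hy⟩
  continuous_toFun := by
    refine Continuous.subtype_mk ?_ _
    exact ContinuousMap.continuous _
  source' := by
    ext y
    refine h.1 _ ?_
    simp
  target' := by
    ext y
    refine (h.2.1 _ ?_).trans ?_
    · simp
    · change α _ = α _
      congr 1
      ext i
      simp [(Fin.castSucc_lt_last i).ne]

theorem nullPath_apply {k : ℕ} {X : Type} [TopologicalSpace X] {x : X} {α : GenLoop (Fin k) X x}
    {β : C((Fin (k + 1) → I), X)} (h : IsNullhomotopy α β) (t : I)
    (y : {j : Fin (k + 1) // j ≠ Fin.last k} → I) :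
    nullPath h t y = β (Cube.insertAt (Fin.last k) (t, y)) := rfl

theorem toLoop_glued {k : ℕ} {X Y : Type} [TopologicalSpace X] [TopologicalSpace Y] {x : X}
    {α : GenLoop (Fin k) X x} {β : C((Fin (k + 1) → I), X)} {f : C(Y, X)}
    {β' : C((Fin (k + 1) → I), Y)} (h : IsNullhomotopy α β) (h' : IsNullhomotopy α (f.comp β'))
    (c : GenLoop (Fin (k + 1)) X x) (hc : IsGluedWithReverse β f β' c) :
    GenLoop.toLoop (Fin.last k) c = (nullPath h).trans (nullPath h').symm := by
  have hu : ∀ (t s : I) (y : {j : Fin (k + 1) // j ≠ Fin.last k} → I),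
      Function.update (Cube.insertAt (Fin.last k) (t, y)) (Fin.last k) s
        = Cube.insertAt (Fin.last k) (s, y) := by
    intro t s y
    ext j
    by_cases hj : j = Fin.last k
    · subst hj; simp
    · simp [hj]
  ext t y
  rw [GenLoop.toLoop_apply, hc, Path.trans_apply]
  have ht : (Cube.insertAt (Fin.last k) (t, y)) (Fin.last k) = t := by simp
  rw [ht, hu, hu]
  split_ifs with h1
  · rw [nullPath_apply]
    congr 3
    exact Set.projIcc_of_mem zero_le_one ((unitInterval.mul_pos_mem_iff zero_lt_two).2 ⟨t.2.1, h1⟩)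
  · change f (β' _) = f (β' (Cube.insertAt (Fin.last k) (σ _, y)))
    congr 4
    have h2 : (2 - 2 * (t : ℝ)) ∈ Set.Icc (0:ℝ) 1 := by
      have := t.2.2
      constructor <;> linarith
    rw [Set.projIcc_of_mem zero_le_one h2]
    ext
    simp
    ring

theorem isNull_comp {k : ℕ} {X Y : Type} [TopologicalSpace X] [TopologicalSpace Y] {x : X} {y : Y}
    (f : C(Y, X)) (hf : f y = x) {α : GenLoop (Fin k) X x} {α' : GenLoop (Fin k) Y y}
    (hα : ∀ q, f (α' q) = α q)
    {β : C((Fin (k + 1) → I), Y)} (h : IsNullhomotopy α' β) : IsNullhomotopy α (f.comp β) := by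
  refine ⟨fun q hq => ?_, fun q hq => ?_, fun q hq => ?_⟩
  · rw [ContinuousMap.comp_apply, h.1 q hq, hf]
  · rw [ContinuousMap.comp_apply, h.2.1 q hq, hα]
  · rw [ContinuousMap.comp_apply, h.2.2 q hq, hf]

theorem genLoopMap_fromLoop {k : ℕ} {X Y : Type} [TopologicalSpace X] [TopologicalSpace Y]
    {x : X} {y : Y} (f : C(Y, X)) (hf : f y = x) {α : GenLoop (Fin k) X x}
    {α' : GenLoop (Fin k) Y y} {β γ : C((Fin (k + 1) → I), Y)}
    (hβ : IsNullhomotopy α' β) (hγ : IsNullhomotopy α' γ)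
    (hβ' : IsNullhomotopy α (f.comp β)) (hγ' : IsNullhomotopy α (f.comp γ)) :
    genLoopMap (Fin (k + 1)) f hf
        (GenLoop.fromLoop (Fin.last k) ((nullPath hβ).trans (nullPath hγ).symm))
      = GenLoop.fromLoop (Fin.last k) ((nullPath hβ').trans (nullPath hγ').symm) := by
  ext q
  change f (GenLoop.fromLoop _ _ q) = _
  rw [GenLoop.fromLoop_apply, GenLoop.fromLoop_apply, Path.trans_apply, Path.trans_apply]
  split_ifs <;> rfl

theorem path_aux {S : Type*} [TopologicalSpace S] {a b : S} (P P' Q Q' : Path a b) :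
    ((P'.trans Q'.symm).trans (Q'.trans Q.symm)).Homotopic
      ((P'.trans P.symm).trans (P.trans Q.symm)) := by
  rw [← Path.Homotopic.Quotient.eq]
  simp only [Path.Homotopic.Quotient.mk_trans, Path.Homotopic.Quotient.mk_symm]
  have key : ∀ (u v : Path.Homotopic.Quotient a b),
      u.symm.trans (u.trans v.symm) = v.symm := by
    intro u v
    rw [← Path.Homotopic.Quotient.trans_assoc]
    simp
  simp [key]

theorem glue_aux {k : ℕ} {X : Type} [TopologicalSpace X] {x : X}
    {S : GenLoop {j : Fin (k + 1) // j ≠ Fin.last k} X x}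
    (c c' : GenLoop (Fin (k + 1)) X x) (P P' Q Q' : Path GenLoop.const S)
    (hc : GenLoop.toLoop (Fin.last k) c = P.trans Q.symm)
    (hc' : GenLoop.toLoop (Fin.last k) c' = P'.trans Q'.symm) :
    piCls (GenLoop.fromLoop (Fin.last k) (Q'.trans Q.symm)) * piCls c'
      = piCls c * piCls (GenLoop.fromLoop (Fin.last k) (P'.trans P.symm)) := by
  refine (HomotopyGroup.mul_spec (i := Fin.last k)).trans
    (Eq.trans ?_ (HomotopyGroup.mul_spec (i := Fin.last k)).symm)
  refine Quotient.sound ?_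
  refine GenLoop.homotopicFrom (Fin.last k) ?_
  rw [← GenLoop.fromLoop_trans_toLoop, ← GenLoop.fromLoop_trans_toLoop, GenLoop.to_from,
    GenLoop.to_from, GenLoop.to_from, GenLoop.to_from, hc, hc']
  exact path_aux _ _ _ _

/-- **Proposition 4.3 (well-definedness of `φ`).**  Let `(X n, p n)` be a tower of
fibrations of pointed topological spaces, with basepoints the components `x n` of a chosen
point of the inverse limit, let `k ≥ 0`, and let `α : I^k → lim_n X_n` be a map sending
`∂I^k` to the basepoint whose class lies in the kernel of
`P : π_k (lim_n X_n) → lim_n π_k X_n`.  For any two choices `β`, `β̄` of families of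
nullhomotopies of the maps `α_n = P_n ∘ α`, the corresponding families
`([β_n * (p_{n+1} ∘ β_{n+1}⁻¹)])_n` and `([β̄_n * (p_{n+1} ∘ β̄_{n+1}⁻¹)])_n` of elements of
`π_{k+1} X_n` lie in the same orbit of the `lim¹` action, i.e. they represent the same
element `φ(α)` of `lim¹_n π_{k+1} X_n`.  (Here the orbit relation
`h' = g · h · ((p_{n+1})_* g)⁻¹`, written with homotopy classes composed in the order of
concatenation of cubes, reads `piCls (c̄ n) = (πp (g (n+1)))⁻¹ * piCls (c n) * g n` in terms
of Mathlib's multiplication on homotopy groups, which composes in the opposite order.) -/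
theorem phi_independent_of_nullhomotopies
    (X : ℕ → Type) [∀ n, TopologicalSpace (X n)] (p : ∀ n, C(X (n + 1), X n))
    (hfib : ∀ n, IsSerreFibration (p n))
    (x : ∀ n, X n) (hx : ∀ n, p n (x (n + 1)) = x n)
    (k : ℕ)
    (α : GenLoop (Fin k) (TowerLim X p) (⟨x, hx⟩ : TowerLim X p))
    (hker : ∀ n, piProjMap k hx n (piCls α) = piConst (Fin k) (x n))
    (β β' : ∀ n, C((Fin (k + 1) → I), X n))
    (hβ : ∀ n, IsNullhomotopy (genLoopMap (Fin k) (TowerLim.proj n) rfl α) (β n))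
    (hβ' : ∀ n, IsNullhomotopy (genLoopMap (Fin k) (TowerLim.proj n) rfl α) (β' n))
    (c c' : ∀ n, GenLoop (Fin (k + 1)) (X n) (x n))
    (hc : ∀ n, IsGluedWithReverse (β n) (p n) (β (n + 1)) (c n))
    (hc' : ∀ n, IsGluedWithReverse (β' n) (p n) (β' (n + 1)) (c' n)) :
    ∃ g : ∀ n, HomotopyGroup (Fin (k + 1)) (X n) (x n),
      ∀ n, piCls (c' n)
        = (piTowerMap (k + 1) hx n (g (n + 1)))⁻¹ * piCls (c n) * g n := by
  have hpα : ∀ n q, p n (genLoopMap (Fin k) (TowerLim.proj (n + 1)) rfl α q)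
      = genLoopMap (Fin k) (TowerLim.proj n) rfl α q := fun n q => (α.1 q).2 n
  have hpβ := fun n => isNull_comp (p n) (hx n) (hpα n) (hβ (n + 1))
  have hpβ' := fun n => isNull_comp (p n) (hx n) (hpα n) (hβ' (n + 1))
  refine ⟨fun n => piCls (GenLoop.fromLoop (Fin.last k)
    ((nullPath (hβ' n)).trans (nullPath (hβ n)).symm)), fun n => ?_⟩
  rw [mul_assoc, eq_inv_mul_iff_mul_eq]
  have e : piTowerMap (k + 1) hx n (piCls (GenLoop.fromLoop (Fin.last k)
      ((nullPath (hβ' (n + 1))).trans (nullPath (hβ (n + 1))).symm)))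
      = piCls (GenLoop.fromLoop (Fin.last k)
      ((nullPath (hpβ' n)).trans (nullPath (hpβ n)).symm)) :=
    congrArg piCls (genLoopMap_fromLoop (p n) (hx n) (hβ' (n + 1)) (hβ (n + 1)) (hpβ' n) (hpβ n))
  rw [e]
  exact glue_aux _ _ _ _ _ _ (toLoop_glued (hβ n) (hpβ n) (c n) (hc n))
    (toLoop_glued (hβ' n) (hpβ' n) (c' n) (hc' n))

end
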